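/- Let n ≥ 1, let P ⊆ ℝ^n be a nonempty bounded open convex set, and let φ : P → ℝ be a convex function that is Lebesgue-integrable on P and satisfies ∫_P φ dμ = 0. Then −(2/(n+1))·(n/(n+1))^n · inf_P φ ≤ (1/μ(P)) ∫_P |φ| dμ ≤ −2 · inf_P φ. -/

import Mathlib

open MeasureTheory Set

/-!
Since `∫ φ = 0`, one has `∫ |φ| = 2 ∫ φ⁻`, where `φ⁻ = max (-φ) 0`. The upper bound is then
`φ⁻ ≤ -inf φ`.

For the lower bound, fix `x₀ ∈ P` and `t ∈ (0, 1)`. Convexity gives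
`φ (t y + (1 - t) x₀) ≤ t φ y + (1 - t) φ x₀` for `y ∈ P`. Integrating over `y ∈ P`, the first term
on the right vanishes, while rescaling shows that `∫_P φ⁻ (t y + (1 - t) x₀) dy ≤ t⁻ⁿ ∫_P φ⁻`.
Hence `∫_P φ⁻ ≥ tⁿ (1 - t) (-φ x₀) μ(P)` (`negPart_integral_lower`). The constant is largest at
`t = n / (n + 1)`. As `x₀` is arbitrary, this inequality also shows that `φ` is bounded below on
`P`, so that the infimum is a genuine one.
-/

/-- A homothety of ratio `t` centred at `x₀` contracts `P` into itself; comparing the negative part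
of `φ` on the contracted copy with the convexity bound gives the key inequality. -/
lemma negPart_integral_lower (n : ℕ) (P : Set (Fin n → ℝ))
    (hbd : Bornology.IsBounded P) (hop : IsOpen P)
    (φ : (Fin n → ℝ) → ℝ) (hφ : ConvexOn ℝ P φ)
    (hint : IntegrableOn φ P volume) (hzero : (∫ x in P, φ x) = 0)
    (x₀ : Fin n → ℝ) (hx₀ : x₀ ∈ P) (t : ℝ) (ht0 : 0 < t) (ht1 : t < 1) :
    t ^ n * (1 - t) * (-φ x₀) * (volume P).toReal ≤ ∫ x in P, max (-φ x) 0 := by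
  have hPm : MeasurableSet P := hop.measurableSet
  have hPfin : volume P ≠ ⊤ := hbd.measure_lt_top.ne
  set N : (Fin n → ℝ) → ℝ := P.indicator (fun x => max (-φ x) 0) with hN
  have hN0 : ∀ x, 0 ≤ N x := fun x => indicator_nonneg (fun _ _ => le_max_right _ _) x
  have hNint : Integrable N volume := by
    rw [hN, integrable_indicator_iff hPm]
    exact hint.neg.pos_part
  set h : (Fin n → ℝ) → ℝ := fun y => N (t • y + (1 - t) • x₀) with hh
  have hhint : Integrable h volume :=
    (hNint.comp_add_right ((1 - t) • x₀)).comp_smul ht0.ne'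
  have hhval : t ^ n * ∫ y, h y = ∫ x in P, max (-φ x) 0 := by
    have h1 := Measure.integral_comp_smul (volume : Measure (Fin n → ℝ))
      (fun z => N (z + (1 - t) • x₀)) t
    rw [integral_add_right_eq_self N ((1 - t) • x₀), Module.finrank_fin_fun,
      abs_of_pos (by positivity), smul_eq_mul] at h1
    rw [hh, h1, hN, integral_indicator hPm, mul_inv_cancel_left₀ (by positivity)]
  have hlow : (1 - t) * (-φ x₀) * (volume P).toReal ≤ ∫ y, h y := by
    calc (1 - t) * (-φ x₀) * (volume P).toReal
        = ∫ y in P, ((1 - t) * (-φ x₀) - t * φ y) := by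
          have hconst : Integrable (fun _ => (1 - t) * (-φ x₀)) (volume.restrict P) :=
            integrableOn_const hPfin
          rw [integral_sub hconst (hint.const_mul t),
            integral_const_mul t, hzero, setIntegral_const, smul_eq_mul, Measure.real]
          ring
      _ ≤ ∫ y in P, h y := by
          refine setIntegral_mono_on ((integrableOn_const hPfin).sub (hint.const_mul t))
            hhint.integrableOn hPm fun y hy => ?_
          have hmem : t • y + (1 - t) • x₀ ∈ P :=
            hφ.1 hy hx₀ ht0.le (by linarith) (by ring)
          have hc := hφ.2 hy hx₀ ht0.le (by linarith : (0 : ℝ) ≤ 1 - t) (by ring)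
          simp only [smul_eq_mul] at hc
          simp only [hh, hN, indicator_of_mem hmem]
          refine le_trans ?_ (le_max_left _ _)
          linarith
      _ ≤ ∫ y, h y := setIntegral_le_integral hhint (Filter.Eventually.of_forall fun y => hN0 _)
  rw [← hhval]
  have := mul_le_mul_of_nonneg_left hlow (by positivity : 0 ≤ t ^ n)
  linarith

/-- Sharp double inequality between the `L¹` norm of a centered convex function
on a bounded open convex set and its infimum. -/
theorem stmt_0 (n : ℕ) (hn : 1 ≤ n) (P : Set (Fin n → ℝ))
    (hne : P.Nonempty) (hbd : Bornology.IsBounded P) (hop : IsOpen P) (hcv : Convex ℝ P)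
    (φ : (Fin n → ℝ) → ℝ) (hφ : ConvexOn ℝ P φ)
    (hint : IntegrableOn φ P volume)
    (hzero : (∫ x in P, φ x) = 0) :
    -((2 / (n + 1 : ℝ)) * ((n : ℝ) / (n + 1)) ^ n) * sInf (φ '' P)
        ≤ (1 / (volume P).toReal) * ∫ x in P, |φ x| ∧
      (1 / (volume P).toReal) * ∫ x in P, |φ x| ≤ -2 * sInf (φ '' P) := by
  have hPm : MeasurableSet P := hop.measurableSet
  have hPfin : volume P ≠ ⊤ := hbd.measure_lt_top.ne
  have hV : 0 < (volume P).toReal :=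
    ENNReal.toReal_pos (hop.measure_pos volume hne).ne' hPfin
  have hNint : IntegrableOn (fun x => max (-φ x) 0) P volume := hint.neg.pos_part
  have habs : ∫ x in P, |φ x| = 2 * ∫ x in P, max (-φ x) 0 := by
    have : ∀ x, |φ x| = φ x + 2 * max (-φ x) 0 := fun x => by
      rcases le_total 0 (φ x) with h | h
      · rw [abs_of_nonneg h, max_eq_right (by linarith)]; ring
      · rw [abs_of_nonpos h, max_eq_left (by linarith)]; ring
    simp_rw [this]
    rw [integral_add hint (hNint.const_mul 2), hzero, integral_const_mul, zero_add]
  have hn0 : (0 : ℝ) < n := by exact_mod_cast hn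
  set c : ℝ := (2 / (n + 1 : ℝ)) * ((n : ℝ) / (n + 1)) ^ n with hc
  have hcpos : 0 < c := by positivity
  set A : ℝ := (1 / (volume P).toReal) * ∫ x in P, |φ x| with hA
  have hkey : ∀ x ∈ P, -(A / c) ≤ φ x := by
    intro x hx
    have h := negPart_integral_lower n P hbd hop φ hφ hint hzero x hx (n / (n + 1))
      (by positivity) (by rw [div_lt_one (by positivity)]; linarith)
    have h1 : (1 : ℝ) - n / (n + 1) = 1 / (n + 1) := by field_simp; ring
    have h2 : c * (-φ x) ≤ A := by
      rw [hA, habs, one_div, ← div_eq_inv_mul, le_div_iff₀ hV, hc]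
      rw [h1] at h
      calc _ = 2 * ((n / (n + 1) : ℝ) ^ n * (1 / (n + 1)) * (-φ x) * (volume P).toReal) := by ring
        _ ≤ _ := by linarith
    rw [neg_le, le_div_iff₀ hcpos]
    linarith
  have hbelow : BddBelow (φ '' P) :=
    ⟨-(A / c), by rintro _ ⟨x, hx, rfl⟩; exact hkey x hx⟩
  have hinf : ∀ x ∈ P, sInf (φ '' P) ≤ φ x := fun x hx =>
    csInf_le hbelow (mem_image_of_mem φ hx)
  constructor
  · have h : -(A / c) ≤ sInf (φ '' P) :=
      le_csInf (hne.image φ) (by rintro _ ⟨x, hx, rfl⟩; exact hkey x hx)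
    rw [neg_le, le_div_iff₀ hcpos] at h
    linarith
  · have hle0 : sInf (φ '' P) ≤ 0 := by
      have h := setIntegral_mono_on (integrableOn_const hPfin) hint hPm hinf
      rw [hzero, setIntegral_const, smul_eq_mul, Measure.real] at h
      exact nonpos_of_mul_nonpos_right h hV
    have h : ∫ x in P, max (-φ x) 0 ≤ ∫ _ in P, -sInf (φ '' P) :=
      setIntegral_mono_on hNint (integrableOn_const hPfin) hPm fun x hx =>
        max_le (neg_le_neg (hinf x hx)) (by linarith)
    rw [setIntegral_const, smul_eq_mul, Measure.real] at h
    rw [hA, habs, one_div, ← div_eq_inv_mul, div_le_iff₀ hV]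
    linarith
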